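/- For every t ≥ 0, the set of permutations σ with t_rev(σ) ≥ t+1 all of whose proper subpermutations have rev-tier at most t (i.e., the basis B_t of the class of (t+1)-reverse-pass sortable permutations) is a finite set. -/

import Mathlib

/-!
Every basis element of the class of permutations of rev-tier at most `t` has length at most
`3 * (t + 1)`, so there are only finitely many.

A separated pair `(a, a + 1)` of `σ` is witnessed by three entries: `a`, `a + 1`, and a larger
entry lying between them. In any pattern of `σ` that keeps these three entries, the images of `a`
and `a + 1` are still consecutive values, with the same orientation, and are still separated
(`UpSepPair.exists_support`, `DownSepPair.exists_support`). Keeping the witnesses of all pairs of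
an alternating chain of length `t + 1` therefore gives a pattern of length at most `3 * (t + 1)`
with such a chain (`AltChain.exists_small_pattern`), that is, of rev-tier at least `t + 1`. By
minimality a basis element is no longer than that pattern (`IsBasisElt.length_le`).
-/

/-!  Common definitions: permutation patterns, separated pairs, rev-tier. -/

/-- `π` contains the pattern `σ`. -/
def Pattern.Contains {n k : ℕ} (π : Equiv.Perm (Fin n)) (σ : Equiv.Perm (Fin k)) : Prop :=
  ∃ α : Fin k → Fin n, StrictMono α ∧ ∀ i j : Fin k, (π (α i) < π (α j) ↔ σ i < σ j)

/-- `π` avoids the pattern `σ`. -/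
def Pattern.Avoids {n k : ℕ} (π : Equiv.Perm (Fin n)) (σ : Equiv.Perm (Fin k)) : Prop :=
  ¬ Pattern.Contains π σ

/-- The pair of values `(a, a+1)` (0-indexed) is an up oriented separated pair in `σ`:
`a` precedes `a+1` and some value `> a+1` occurs strictly between them. -/
def UpSepPair {n : ℕ} (σ : Equiv.Perm (Fin n)) (a : Fin n) : Prop :=
  ∃ hb : (a : ℕ) + 1 < n,
    σ.symm a < σ.symm ⟨(a : ℕ) + 1, hb⟩ ∧
    ∃ p : Fin n, σ.symm a < p ∧ p < σ.symm ⟨(a : ℕ) + 1, hb⟩ ∧ (a : ℕ) + 1 < (σ p : ℕ)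

/-- The pair of values `(a, a+1)` (0-indexed) is a down oriented separated pair in `σ`. -/
def DownSepPair {n : ℕ} (σ : Equiv.Perm (Fin n)) (a : Fin n) : Prop :=
  ∃ hb : (a : ℕ) + 1 < n,
    σ.symm ⟨(a : ℕ) + 1, hb⟩ < σ.symm a ∧
    ∃ p : Fin n, σ.symm ⟨(a : ℕ) + 1, hb⟩ < p ∧ p < σ.symm a ∧ (a : ℕ) + 1 < (σ p : ℕ)

/-- `(a, a+1)` is a separated pair (of either orientation). -/
def SepPair {n : ℕ} (σ : Equiv.Perm (Fin n)) (a : Fin n) : Prop :=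
  UpSepPair σ a ∨ DownSepPair σ a

/-- `σ` has no separated pairs. -/
def NoSepPairs {n : ℕ} (σ : Equiv.Perm (Fin n)) : Prop :=
  ∀ a : Fin n, ¬ SepPair σ a

/-- `f` lists the lower values of an increasing sequence of separated pairs in `σ` with
alternating orientations; the first pair is down oriented iff `firstDown = true`. -/
def AltChain {n : ℕ} (σ : Equiv.Perm (Fin n)) (firstDown : Bool) {t : ℕ}
    (f : Fin t → Fin n) : Prop :=
  StrictMono f ∧ ∀ j : Fin t,
    if ((j : ℕ) % 2 = 0) ↔ (firstDown = true) then DownSepPair σ (f j)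
    else UpSepPair σ (f j)

/-- The rev-tier of `σ`: the maximal length of an increasing sequence of separated pairs
with alternating orientations beginning with a down oriented pair. -/
noncomputable def revTier {n : ℕ} (σ : Equiv.Perm (Fin n)) : ℕ :=
  sSup {t : ℕ | ∃ f : Fin t → Fin n, AltChain σ true f}

/-- Maximal length of an increasing alternating sequence of separated pairs (either
starting orientation). -/
noncomputable def maxAltLen {n : ℕ} (σ : Equiv.Perm (Fin n)) : ℕ :=
  sSup {t : ℕ | ∃ b : Bool, ∃ f : Fin t → Fin n, AltChain σ b f}

/-- `σ` has a separated pair and every maximum-length increasing alternating sequence of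
separated pairs begins with an up oriented pair. -/
def UpOriented {n : ℕ} (σ : Equiv.Perm (Fin n)) : Prop :=
  1 ≤ maxAltLen σ ∧ ¬ ∃ f : Fin (maxAltLen σ) → Fin n, AltChain σ true f

/-- `σ` has a separated pair and every maximum-length increasing alternating sequence of
separated pairs begins with a down oriented pair. -/
def DownOriented {n : ℕ} (σ : Equiv.Perm (Fin n)) : Prop :=
  1 ≤ maxAltLen σ ∧ ¬ ∃ f : Fin (maxAltLen σ) → Fin n, AltChain σ false f

/-- `σ` is a basis element of the class of permutations of rev-tier at most `t`. -/
def IsBasisElt (t : ℕ) {n : ℕ} (σ : Equiv.Perm (Fin n)) : Prop :=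
  t + 1 ≤ revTier σ ∧
  ∀ (m : ℕ) (τ : Equiv.Perm (Fin m)), m < n → Pattern.Contains σ τ → revTier τ ≤ t

/-- The entry `1` of `σ` is in (1-indexed) position `k`. -/
def onePos {n : ℕ} (σ : Equiv.Perm (Fin n)) (k : ℕ) : Prop :=
  ∀ h : 0 < n, (σ.symm ⟨0, h⟩ : ℕ) + 1 = k

/-- `η(n,k)`: number of permutations of length `n` with no separated pairs and entry `1`
in position `k`. -/
noncomputable def eta (n k : ℕ) : ℕ :=
  Nat.card {σ : Equiv.Perm (Fin n) // NoSepPairs σ ∧ onePos σ k}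

/-- `η(n)`: number of permutations of length `n` with no separated pairs. -/
noncomputable def etaTot (n : ℕ) : ℕ :=
  Nat.card {σ : Equiv.Perm (Fin n) // NoSepPairs σ}

/-- `μ_U(n,t,k)`: number of up-oriented permutations of length `n`, rev-tier `t`, with
entry `1` in position `k`. -/
noncomputable def muU (n t k : ℕ) : ℕ :=
  Nat.card {σ : Equiv.Perm (Fin n) // UpOriented σ ∧ revTier σ = t ∧ onePos σ k}

/-- `μ_D(n,t,k)`: number of down-oriented permutations of length `n`, rev-tier `t`, with
entry `1` in position `k`. -/
noncomputable def muD (n t k : ℕ) : ℕ :=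
  Nat.card {σ : Equiv.Perm (Fin n) // DownOriented σ ∧ revTier σ = t ∧ onePos σ k}

/-- `π` is a down-up alternating permutation: `π₁ > π₂ < π₃ > ⋯`. -/
def DownUp {n : ℕ} (π : Equiv.Perm (Fin n)) : Prop :=
  ∀ (i : ℕ) (h : i + 1 < n),
    if i % 2 = 0 then π ⟨i + 1, h⟩ < π ⟨i, by omega⟩
    else π ⟨i, by omega⟩ < π ⟨i + 1, h⟩

/-- The Entringer number `E_{n,k}`: down-up alternating permutations of length `n` whose
first entry is `k` (1-indexed value). -/
noncomputable def entringer (n k : ℕ) : ℕ :=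
  Nat.card {π : Equiv.Perm (Fin n) // DownUp π ∧ ∀ h : 0 < n, (π ⟨0, h⟩ : ℕ) + 1 = k}

/-- The reversal of a permutation: `(revP σ) j = σ (n + 1 - j)`. -/
def revP {n : ℕ} (σ : Equiv.Perm (Fin n)) : Equiv.Perm (Fin n) :=
  (Fin.revPerm).trans σ

/-- The explicit maximal rev-tier permutation of length `n` (0-indexed values):
the even entries of `{1,…,n}` in decreasing order, then `n`, then the odd entries in
increasing order. -/
def maxPermVal (n : ℕ) (i : Fin n) : Fin n :=
  if h1 : (i : ℕ) < (n - 1) / 2 then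
    ⟨2 * ((n - 1) / 2) - 2 * (i : ℕ) - 1, by omega⟩
  else if h2 : (i : ℕ) = (n - 1) / 2 then
    ⟨n - 1, by have := i.isLt; omega⟩
  else
    ⟨2 * ((i : ℕ) - (n - 1) / 2 - 1), by have := i.isLt; omega⟩

def p231 : Equiv.Perm (Fin 3) :=
  ⟨![1, 2, 0], ![2, 0, 1], by decide, by decide⟩

def p132 : Equiv.Perm (Fin 3) :=
  ⟨![0, 2, 1], ![0, 2, 1], by decide, by decide⟩

def p2413 : Equiv.Perm (Fin 4) :=
  ⟨![1, 3, 0, 2], ![2, 0, 3, 1], by decide, by decide⟩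

def p2431 : Equiv.Perm (Fin 4) :=
  ⟨![1, 3, 2, 0], ![3, 0, 2, 1], by decide, by decide⟩

def p23154 : Equiv.Perm (Fin 5) :=
  ⟨![1, 2, 0, 4, 3], ![2, 0, 1, 4, 3], by decide, by decide⟩

def p24153 : Equiv.Perm (Fin 5) :=
  ⟨![1, 3, 0, 4, 2], ![2, 0, 4, 1, 3], by decide, by decide⟩

def p24513 : Equiv.Perm (Fin 5) :=
  ⟨![1, 3, 4, 0, 2], ![3, 0, 4, 1, 2], by decide, by decide⟩

def p24531 : Equiv.Perm (Fin 5) :=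
  ⟨![1, 3, 4, 2, 0], ![4, 0, 3, 1, 2], by decide, by decide⟩

def p42513 : Equiv.Perm (Fin 5) :=
  ⟨![3, 1, 4, 0, 2], ![3, 1, 4, 0, 2], by decide, by decide⟩

def p42531 : Equiv.Perm (Fin 5) :=
  ⟨![3, 1, 4, 2, 0], ![4, 1, 3, 0, 2], by decide, by decide⟩

def p231564 : Equiv.Perm (Fin 6) :=
  ⟨![1, 2, 0, 4, 5, 3], ![2, 0, 1, 5, 3, 4], by decide, by decide⟩

def p261453 : Equiv.Perm (Fin 6) :=
  ⟨![1, 5, 0, 3, 4, 2], ![2, 0, 5, 3, 4, 1], by decide, by decide⟩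

def p523164 : Equiv.Perm (Fin 6) :=
  ⟨![4, 1, 2, 0, 5, 3], ![3, 1, 2, 5, 0, 4], by decide, by decide⟩

def p562413 : Equiv.Perm (Fin 6) :=
  ⟨![4, 5, 1, 3, 0, 2], ![4, 2, 5, 3, 0, 1], by decide, by decide⟩

def p562431 : Equiv.Perm (Fin 6) :=
  ⟨![4, 5, 1, 3, 2, 0], ![5, 2, 4, 3, 0, 1], by decide, by decide⟩

def p6723154 : Equiv.Perm (Fin 7) :=
  ⟨![5, 6, 1, 2, 0, 4, 3], ![4, 2, 3, 6, 5, 0, 1], by decide, by decide⟩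

def p4321 : Equiv.Perm (Fin 4) :=
  ⟨![3, 2, 1, 0], ![3, 2, 1, 0], by decide, by decide⟩

def p4213 : Equiv.Perm (Fin 4) :=
  ⟨![3, 1, 0, 2], ![2, 1, 3, 0], by decide, by decide⟩

/-- `τ` is the pattern of `σ` formed by the positions in the range of `α`; the values it uses are
the range of `β`. -/
def IsPatternVia {n m : ℕ} (σ : Equiv.Perm (Fin n)) (τ : Equiv.Perm (Fin m))
    (α β : Fin m ↪o Fin n) : Prop :=
  ∀ i, σ (α i) = β (τ i)

theorem exists_isPatternVia {n : ℕ} (σ : Equiv.Perm (Fin n)) (S : Finset (Fin n)) :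
    ∃ (τ : Equiv.Perm (Fin S.card)) (α β : Fin S.card ↪o Fin n),
      IsPatternVia σ τ α β ∧ Set.range α = S := by
  have hV : (S.map σ.toEmbedding).card = S.card := Finset.card_map _
  have e : ∀ a, a ∈ S ↔ σ a ∈ S.map σ.toEmbedding := by simp
  refine ⟨((S.orderIsoOfFin rfl).toEquiv.trans (σ.subtypeEquiv e)).trans
    ((S.map σ.toEmbedding).orderIsoOfFin hV).symm.toEquiv,
    S.orderEmbOfFin rfl, (S.map σ.toEmbedding).orderEmbOfFin hV, ?_, by simp⟩
  intro i
  simp [← Finset.coe_orderIsoOfFin_apply]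

theorem IsPatternVia.contains {n m : ℕ} {σ : Equiv.Perm (Fin n)} {τ : Equiv.Perm (Fin m)}
    {α β : Fin m ↪o Fin n} (h : IsPatternVia σ τ α β) : Pattern.Contains σ τ :=
  ⟨α, α.strictMono, fun i j => by rw [h, h, β.lt_iff_lt]⟩

/-- Consecutive values of `σ` that are both used by a pattern stay consecutive in it. -/
theorem val_succ_of_orderEmb {n m : ℕ} (β : Fin m ↪o Fin n) {x y : Fin m}
    (h : (β y : ℕ) = β x + 1) : (y : ℕ) = x + 1 := by
  have hxy : x < y := β.lt_iff_lt.1 (by rw [Fin.lt_def]; omega)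
  by_contra hne
  have hlt : (x : ℕ) + 1 < y := by rw [Fin.lt_def] at hxy; omega
  have h1 : β x < β ⟨x + 1, by omega⟩ := β.lt_iff_lt.2 (by simp [Fin.lt_def])
  have h2 : β ⟨x + 1, by omega⟩ < β y := β.lt_iff_lt.2 (by simpa [Fin.lt_def] using hlt)
  rw [Fin.lt_def] at h1 h2
  omega

/-- An up oriented separated pair survives in every pattern that keeps three suitable
positions: those of its two entries and of a separating larger entry. -/
theorem UpSepPair.exists_support {n : ℕ} {σ : Equiv.Perm (Fin n)} {a : Fin n}
    (h : UpSepPair σ a) : ∃ W : Finset (Fin n), W.card ≤ 3 ∧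
      ∀ (m : ℕ) (τ : Equiv.Perm (Fin m)) (α β : Fin m ↪o Fin n), IsPatternVia σ τ α β →
        (W : Set (Fin n)) ⊆ Set.range α → ∃ x, β x = a ∧ UpSepPair τ x := by
  obtain ⟨hb, hlt, p, hp1, hp2, hp3⟩ := h
  refine ⟨{σ.symm a, σ.symm ⟨a + 1, hb⟩, p}, Finset.card_le_three, ?_⟩
  intro m τ α β hστ hW
  obtain ⟨u, hu⟩ := hW (show σ.symm a ∈ _ by simp)
  obtain ⟨v, hv⟩ := hW (show σ.symm ⟨a + 1, hb⟩ ∈ _ by simp)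
  obtain ⟨q, rfl⟩ := hW (show p ∈ _ by simp)
  have hβu : β (τ u) = a := by rw [← hστ, hu]; simp
  have hβv : β (τ v) = ⟨a + 1, hb⟩ := by rw [← hστ, hv]; simp
  have hs : (τ v : ℕ) = τ u + 1 := val_succ_of_orderEmb β (by rw [hβu, hβv])
  have hb' : (τ u : ℕ) + 1 < m := hs ▸ (τ v).isLt
  have hv' : τ.symm ⟨τ u + 1, hb'⟩ = v := by
    rw [Equiv.symm_apply_eq]; exact Fin.ext hs.symm
  rw [← hu] at hp1
  rw [← hv] at hp2
  rw [← hu, ← hv] at hlt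
  refine ⟨τ u, hβu, hb', ?_, q, ?_, ?_, ?_⟩
  · rw [hv']; simpa using hlt
  · simpa using hp1
  · rw [hv']; simpa using hp2
  · rw [← hs, ← Fin.lt_def, ← β.lt_iff_lt, ← hστ q, hβv]
    exact hp3

/-- The analogue of `UpSepPair.exists_support` for down oriented pairs. -/
theorem DownSepPair.exists_support {n : ℕ} {σ : Equiv.Perm (Fin n)} {a : Fin n}
    (h : DownSepPair σ a) : ∃ W : Finset (Fin n), W.card ≤ 3 ∧
      ∀ (m : ℕ) (τ : Equiv.Perm (Fin m)) (α β : Fin m ↪o Fin n), IsPatternVia σ τ α β →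
        (W : Set (Fin n)) ⊆ Set.range α → ∃ x, β x = a ∧ DownSepPair τ x := by
  obtain ⟨hb, hlt, p, hp1, hp2, hp3⟩ := h
  refine ⟨{σ.symm a, σ.symm ⟨a + 1, hb⟩, p}, Finset.card_le_three, ?_⟩
  intro m τ α β hστ hW
  obtain ⟨u, hu⟩ := hW (show σ.symm a ∈ _ by simp)
  obtain ⟨v, hv⟩ := hW (show σ.symm ⟨a + 1, hb⟩ ∈ _ by simp)
  obtain ⟨q, rfl⟩ := hW (show p ∈ _ by simp)
  have hβu : β (τ u) = a := by rw [← hστ, hu]; simp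
  have hβv : β (τ v) = ⟨a + 1, hb⟩ := by rw [← hστ, hv]; simp
  have hs : (τ v : ℕ) = τ u + 1 := val_succ_of_orderEmb β (by rw [hβu, hβv])
  have hb' : (τ u : ℕ) + 1 < m := hs ▸ (τ v).isLt
  have hv' : τ.symm ⟨τ u + 1, hb'⟩ = v := by
    rw [Equiv.symm_apply_eq]; exact Fin.ext hs.symm
  rw [← hv] at hp1
  rw [← hu] at hp2
  rw [← hu, ← hv] at hlt
  refine ⟨τ u, hβu, hb', ?_, q, ?_, ?_, ?_⟩
  · rw [hv']; simpa using hlt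
  · rw [hv']; simpa using hp1
  · simpa using hp2
  · rw [← hs, ← Fin.lt_def, ← β.lt_iff_lt, ← hστ q, hβv]
    exact hp3

/-- An alternating chain of length `T` already lives in a pattern of length at most `3 * T`. -/
theorem AltChain.exists_small_pattern {n T : ℕ} {σ : Equiv.Perm (Fin n)} {b : Bool}
    {f : Fin T → Fin n} (hf : AltChain σ b f) :
    ∃ (m : ℕ) (τ : Equiv.Perm (Fin m)), m ≤ 3 * T ∧ Pattern.Contains σ τ ∧
      ∃ g : Fin T → Fin m, AltChain τ b g := by
  obtain ⟨hmono, hpairs⟩ := hf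
  have key : ∀ j : Fin T, ∃ W : Finset (Fin n), W.card ≤ 3 ∧
      ∀ (m : ℕ) (τ : Equiv.Perm (Fin m)) (α β : Fin m ↪o Fin n), IsPatternVia σ τ α β →
        (W : Set (Fin n)) ⊆ Set.range α → ∃ x, β x = f j ∧
          if ((j : ℕ) % 2 = 0) ↔ (b = true) then DownSepPair τ x else UpSepPair τ x := by
    intro j
    have hj := hpairs j
    split_ifs at hj ⊢
    · exact hj.exists_support
    · exact hj.exists_support
  choose W hcard hW using key
  obtain ⟨τ, α, β, hστ, hα⟩ := exists_isPatternVia σ (Finset.univ.biUnion W)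
  have hsub : ∀ j, (W j : Set (Fin n)) ⊆ Set.range α := fun j => by
    rw [hα]
    exact_mod_cast Finset.subset_biUnion_of_mem W (Finset.mem_univ j)
  choose g hg hgpair using fun j => hW j _ τ α β hστ (hsub j)
  refine ⟨_, τ, ?_, hστ.contains, g, ?_, hgpair⟩
  · have := Finset.card_biUnion_le_card_mul Finset.univ W 3 (fun j _ => hcard j)
    rw [Finset.card_univ, Fintype.card_fin] at this
    omega
  · intro i j hij
    rw [← β.lt_iff_lt, hg, hg]
    exact hmono hij

/-- Chains are strictly increasing, so the supremum defining `revTier` is over a bounded set. -/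
theorem bddAbove_chainLengths {n : ℕ} (σ : Equiv.Perm (Fin n)) :
    BddAbove {t : ℕ | ∃ f : Fin t → Fin n, AltChain σ true f} := by
  refine ⟨n, ?_⟩
  rintro t ⟨f, hf, -⟩
  simpa using Fintype.card_le_of_injective f hf.injective

theorem le_revTier_iff {n : ℕ} (σ : Equiv.Perm (Fin n)) (T : ℕ) :
    T ≤ revTier σ ↔ ∃ f : Fin T → Fin n, AltChain σ true f := by
  constructor
  · intro h
    have hne : {t : ℕ | ∃ f : Fin t → Fin n, AltChain σ true f}.Nonempty :=
      ⟨0, Fin.elim0, fun i => i.elim0, fun i => i.elim0⟩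
    obtain ⟨f, hmono, hf⟩ := Nat.sSup_mem hne (bddAbove_chainLengths σ)
    exact ⟨f ∘ Fin.castLE h, hmono.comp (Fin.strictMono_castLE h),
      fun j => hf (Fin.castLE h j)⟩
  · intro h
    exact le_csSup (bddAbove_chainLengths σ) h

theorem IsBasisElt.length_le {t n : ℕ} {σ : Equiv.Perm (Fin n)} (h : IsBasisElt t σ) :
    n ≤ 3 * (t + 1) := by
  obtain ⟨hge, hmin⟩ := h
  obtain ⟨f, hf⟩ := (le_revTier_iff σ (t + 1)).1 hge
  obtain ⟨m, τ, hm, hcont, hg⟩ := hf.exists_small_pattern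
  by_contra hn
  have h1 := hmin m τ (by omega) hcont
  have h2 := (le_revTier_iff τ (t + 1)).2 hg
  omega

/-- the basis `B_t` of the class of `(t+1)`-reverse-pass sortable
permutations is finite. -/
theorem basis_finite (t : ℕ) :
    {p : (n : ℕ) × Equiv.Perm (Fin n) | IsBasisElt t p.2}.Finite := by
  refine (Set.finite_range fun q : (n : Fin (3 * (t + 1) + 1)) × Equiv.Perm (Fin n) =>
    (⟨q.1, q.2⟩ : (n : ℕ) × Equiv.Perm (Fin n))).subset ?_
  rintro ⟨n, σ⟩ hσ
  exact ⟨⟨⟨n, Nat.lt_succ_of_le (IsBasisElt.length_le hσ)⟩, σ⟩, rfl⟩
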